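/- Let p, q ∈ M be projections and x ∈ M arbitrary. Then ‖x − qxp‖₂ ≤ ‖(1 − q)x‖₂ + ‖x(1 − p)‖₂, and consequently ‖x − qxp‖₂ ≤ ‖xx* − q‖₂^{1/2} + ‖x*x − p‖₂^{1/2}. -/

import Mathlib

/-!
Since `x - q x p = (1 - q) x + q (x (1 - p))` and left multiplication by a projection contracts the
2-norm, the first inequality is the triangle inequality. For the second, traciality and
`(1 - q) q = 0` give `‖(1 - q) x‖₂² = τ ((1 - q) x x*) = τ ((1 - q) (x x* - q))`, which by
Cauchy–Schwarz is at most `‖1 - q‖₂ ‖x x* - q‖₂`; the other term is the same quantity for `x*`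
and `p`.
-/

open scoped ComplexOrder

/-- The tracial 2-norm `‖x‖₂ = (τ(x*x))^{1/2}` associated to a linear functional `τ`. -/
noncomputable def tnorm {M : Type*} [Ring M] [StarRing M] [Algebra ℂ M]
    (τ : M →ₗ[ℂ] ℂ) (x : M) : ℝ :=
  Real.sqrt (τ (star x * x)).re

open scoped ComplexConjugate

lemma star_mul_mul_self_of_isStarProjection {M : Type*} [Semigroup M] [StarMul M] {e : M}
    (he : IsStarProjection e) (y : M) : star (e * y) * (e * y) = star y * (e * y) := by
  rw [star_mul, he.isSelfAdjoint.star_eq, mul_assoc, ← mul_assoc e e y, he.isIdempotentElem.eq]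

section PositiveFunctional

variable {M : Type*} [Ring M] [StarRing M] [Algebra ℂ M] {τ : M →ₗ[ℂ] ℂ}

lemma tnorm_nonneg (x : M) : 0 ≤ tnorm τ x :=
  Real.sqrt_nonneg _

lemma tnorm_sq (hτpos : ∀ x : M, 0 ≤ τ (star x * x)) (x : M) :
    tnorm τ x ^ 2 = (τ (star x * x)).re :=
  Real.sq_sqrt (Complex.le_def.1 (hτpos x)).1

lemma tnorm_one (hτ1 : τ 1 = 1) : tnorm τ 1 = 1 := by
  simp [tnorm, hτ1]

lemma tnorm_star (hτtr : ∀ x y : M, τ (x * y) = τ (y * x)) (x : M) :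
    tnorm τ (star x) = tnorm τ x := by
  rw [tnorm, tnorm, star_star, hτtr]

lemma tnorm_mul_sq_add_tnorm_one_sub_mul_sq (hτpos : ∀ x : M, 0 ≤ τ (star x * x)) {e : M}
    (he : IsStarProjection e) (y : M) :
    tnorm τ (e * y) ^ 2 + tnorm τ ((1 - e) * y) ^ 2 = tnorm τ y ^ 2 := by
  rw [tnorm_sq hτpos, tnorm_sq hτpos, tnorm_sq hτpos, star_mul_mul_self_of_isStarProjection he,
    star_mul_mul_self_of_isStarProjection he.one_sub, ← Complex.add_re, ← map_add, ← mul_add,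
    ← add_mul, add_sub_cancel, one_mul]

lemma tnorm_mul_le_of_isStarProjection (hτpos : ∀ x : M, 0 ≤ τ (star x * x)) {e : M}
    (he : IsStarProjection e) (y : M) : tnorm τ (e * y) ≤ tnorm τ y := by
  refine le_of_sq_le_sq ?_ (tnorm_nonneg _)
  rw [← tnorm_mul_sq_add_tnorm_one_sub_mul_sq hτpos he y]
  exact le_add_of_nonneg_right (sq_nonneg _)

lemma tnorm_one_sub_mul_sq (hτpos : ∀ x : M, 0 ≤ τ (star x * x))
    (hτtr : ∀ x y : M, τ (x * y) = τ (y * x)) {q : M} (hq : IsStarProjection q) (x : M) :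
    tnorm τ ((1 - q) * x) ^ 2 = (τ ((1 - q) * (x * star x - q))).re := by
  rw [tnorm_sq hτpos, star_mul_mul_self_of_isStarProjection hq.one_sub, hτtr, mul_assoc, mul_sub,
    hq.one_sub_mul_self, sub_zero]

variable [StarModule ℂ M]

lemma map_star_eq_conj (hτpos : ∀ x : M, 0 ≤ τ (star x * x)) (x : M) :
    τ (star x) = conj (τ x) := by
  have im_add_eq_zero (y : M) : (τ (star y)).im + (τ y).im = 0 := by
    have h_one := (Complex.le_def.1 (hτpos 1)).2
    have h_self := (Complex.le_def.1 (hτpos y)).2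
    have h_one_add := (Complex.le_def.1 (hτpos (1 + y))).2
    simp only [star_add, star_one, add_mul, mul_add, one_mul, mul_one, map_add, Complex.add_im,
      Complex.zero_im] at h_one h_self h_one_add
    linarith
  have hx := im_add_eq_zero x
  have hIx := im_add_eq_zero (Complex.I • x)
  simp only [star_smul, Complex.star_def, Complex.conj_I, map_smul, smul_eq_mul, neg_mul,
    Complex.neg_im, Complex.I_mul_im] at hIx
  apply Complex.ext
  · rw [Complex.conj_re]
    linarith
  · rw [Complex.conj_im]
    linarith

/-- The semi-inner product `⟨a, b⟩ = τ (a* b)` of the GNS construction for a positive functional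
`τ` on a complex *-algebra. It is linear in the second variable, and its seminorm is `tnorm τ` by
definition. -/
abbrev gnsCore (hτpos : ∀ x : M, 0 ≤ τ (star x * x)) : PreInnerProductSpace.Core ℂ M where
  inner a b := τ (star a * b)
  conj_inner_symm a b := by rw [← map_star_eq_conj hτpos, star_mul, star_star]
  re_inner_nonneg a := (Complex.le_def.1 (hτpos a)).1
  add_left a b c := by rw [star_add, add_mul, map_add]
  smul_left a b r := by
    rw [star_smul, smul_mul_assoc, map_smul, smul_eq_mul, Complex.star_def]

lemma norm_map_star_mul_le (hτpos : ∀ x : M, 0 ≤ τ (star x * x)) (a b : M) :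
    ‖τ (star a * b)‖ ≤ tnorm τ a * tnorm τ b :=
  InnerProductSpace.Core.norm_inner_le_norm (c := gnsCore hτpos) a b

lemma tnorm_add_le (hτpos : ∀ x : M, 0 ≤ τ (star x * x)) (a b : M) :
    tnorm τ (a + b) ≤ tnorm τ a + tnorm τ b :=
  letI := InnerProductSpace.Core.toSeminormedAddCommGroup (c := gnsCore hτpos)
  norm_add_le a b

lemma tnorm_sub_mul_mul_le (hτpos : ∀ x : M, 0 ≤ τ (star x * x)) {q : M}
    (hq : IsStarProjection q) (p x : M) :
    tnorm τ (x - q * x * p) ≤ tnorm τ ((1 - q) * x) + tnorm τ (x * (1 - p)) :=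
  calc
    tnorm τ (x - q * x * p) = tnorm τ ((1 - q) * x + q * (x * (1 - p))) := by
      congr 1; noncomm_ring
    _ ≤ tnorm τ ((1 - q) * x) + tnorm τ (q * (x * (1 - p))) := tnorm_add_le hτpos _ _
    _ ≤ tnorm τ ((1 - q) * x) + tnorm τ (x * (1 - p)) := by
      gcongr
      exact tnorm_mul_le_of_isStarProjection hτpos hq _

lemma tnorm_one_sub_mul_le (hτpos : ∀ x : M, 0 ≤ τ (star x * x))
    (hτtr : ∀ x y : M, τ (x * y) = τ (y * x)) {q : M} (hq : IsStarProjection q) (x : M) :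
    tnorm τ ((1 - q) * x) ≤ √(tnorm τ 1) * √(tnorm τ (x * star x - q)) := by
  have tnorm_one_sub_le : tnorm τ (1 - q) ≤ tnorm τ 1 := by
    simpa only [mul_one] using tnorm_mul_le_of_isStarProjection hτpos hq.one_sub 1
  rw [← Real.sqrt_mul (tnorm_nonneg _)]
  refine Real.le_sqrt_of_sq_le ?_
  calc
    tnorm τ ((1 - q) * x) ^ 2 = (τ (star (1 - q) * (x * star x - q))).re := by
      rw [tnorm_one_sub_mul_sq hτpos hτtr hq, hq.one_sub.isSelfAdjoint.star_eq]
    _ ≤ ‖τ (star (1 - q) * (x * star x - q))‖ := Complex.re_le_norm _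
    _ ≤ tnorm τ (1 - q) * tnorm τ (x * star x - q) := norm_map_star_mul_le hτpos _ _
    _ ≤ tnorm τ 1 * tnorm τ (x * star x - q) :=
      mul_le_mul_of_nonneg_right tnorm_one_sub_le (tnorm_nonneg _)

lemma tnorm_mul_one_sub_le (hτpos : ∀ x : M, 0 ≤ τ (star x * x))
    (hτtr : ∀ x y : M, τ (x * y) = τ (y * x)) {p : M} (hp : IsStarProjection p) (x : M) :
    tnorm τ (x * (1 - p)) ≤ √(tnorm τ 1) * √(tnorm τ (star x * x - p)) := by
  rw [← tnorm_star hτtr, star_mul, hp.one_sub.isSelfAdjoint.star_eq]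
  simpa only [star_star] using tnorm_one_sub_mul_le hτpos hτtr hp (star x)

theorem stmt4_general (hτpos : ∀ x : M, 0 ≤ τ (star x * x))
    (hτtr : ∀ x y : M, τ (x * y) = τ (y * x)) {p q : M} (hp : IsStarProjection p)
    (hq : IsStarProjection q) (x : M) :
    tnorm τ (x - q * x * p) ≤ tnorm τ ((1 - q) * x) + tnorm τ (x * (1 - p)) ∧
      tnorm τ (x - q * x * p) ≤
        √(tnorm τ 1) * (√(tnorm τ (x * star x - q)) + √(tnorm τ (star x * x - p))) := by
  have triangle := tnorm_sub_mul_mul_le hτpos hq p x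
  refine ⟨triangle, triangle.trans ?_⟩
  rw [mul_add]
  exact add_le_add (tnorm_one_sub_mul_le hτpos hτtr hq x) (tnorm_mul_one_sub_le hτpos hτtr hp x)

end PositiveFunctional

theorem stmt4 {M : Type*} [CStarAlgebra M]
    (τ : M →ₗ[ℂ] ℂ) (hτ1 : τ 1 = 1)
    (hτpos : ∀ x : M, 0 ≤ τ (star x * x))
    (hτtr : ∀ x y : M, τ (x * y) = τ (y * x))
    (p q : M) (hp1 : star p = p) (hp2 : p * p = p) (hq1 : star q = q) (hq2 : q * q = q)
    (x : M) :
    tnorm τ (x - q * x * p) ≤ tnorm τ ((1 - q) * x) + tnorm τ (x * (1 - p)) ∧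
      tnorm τ (x - q * x * p) ≤
        Real.sqrt (tnorm τ (x * star x - q)) + Real.sqrt (tnorm τ (star x * x - p)) := by
  simpa only [tnorm_one hτ1, Real.sqrt_one, one_mul] using
    stmt4_general hτpos hτtr ⟨hp2, hp1⟩ ⟨hq2, hq1⟩ x
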